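/- Consider sets B ⊆ ℝ² containing the boundary of an axis-parallel square centered at each point of the segment {(t,t) : t ∈ [0,1]}; that is, for every t ∈ [0,1] there exists s(t) > 0 with {y ∈ ℝ² : ‖y − (t,t)‖_∞ = s(t)} ⊆ B. Then: (i) every such set B satisfies dim_P B ≥ 3/2; and (ii) for every ε > 0 there exists a bounded set B ⊆ ℝ² with this property satisfying dim_M B ≤ 3/2 + ε. In particular, the infimum of dim_P B (and of dim_M B over bounded such B) equals 3/2. -/

import Mathlib

open Set Filter Bornology

/-- Covering number of `E` by open balls of radius `ε`. -/
noncomputable def covNum {X : Type*} [PseudoMetricSpace X] (E : Set X) (ε : ℝ) : ℕ∞ :=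
  ⨅ (t : Finset X) (_ : E ⊆ ⋃ x ∈ t, Metric.ball x ε), (t.card : ℕ∞)

/-- Upper Minkowski (box-counting) dimension. -/
noncomputable def dimM {X : Type*} [PseudoMetricSpace X] (E : Set X) : ℝ :=
  limsup (fun ε : ℝ => Real.log ((covNum E ε).toNat) / Real.log (1 / ε))
    (nhdsWithin 0 (Ioi 0))

/-- Packing dimension, as modified upper box dimension: the infimum of
`⨆ j, dimM (E j)` over countable covers of the set by bounded sets. -/
noncomputable def dimP {X : Type*} [PseudoMetricSpace X] (E : Set X) : ℝ :=
  sInf { a : ℝ | ∃ f : ℕ → Set X, (E ⊆ ⋃ j, f j) ∧ (∀ j, IsBounded (f j)) ∧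
    a = ⨆ j, dimM (f j) }

/-- The boundary of the axis-parallel square in the plane with center `c` and half-side `s`,
with respect to the sup norm `‖y - c‖_∞ = max |y 0 - c 0| |y 1 - c 1|`. -/
def squareBdry (c : Fin 2 → ℝ) (s : ℝ) : Set (Fin 2 → ℝ) :=
  { y | max |y 0 - c 0| |y 1 - c 1| = s }

/-- `B ⊆ ℝ²` contains the boundary of an axis-parallel square centered at each point of the
diagonal segment `{(t,t) : t ∈ [0,1]}`. -/
def DiagProp (B : Set (Fin 2 → ℝ)) : Prop :=
  ∀ t ∈ Icc (0 : ℝ) 1, ∃ s > (0 : ℝ), squareBdry ![t, t] s ⊆ B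


theorem covNum_le_card {X : Type*} [PseudoMetricSpace X] {E : Set X} {ε : ℝ} {t : Finset X}
    (h : E ⊆ ⋃ x ∈ t, Metric.ball x ε) : (covNum E ε).toNat ≤ t.card := by
  have h1 : covNum E ε ≤ (t.card : ℕ∞) := iInf₂_le t h
  have := ENat.toNat_le_toNat h1 (ENat.coe_ne_top _)
  simpa using this

theorem exists_covNum_cover {X : Type*} [PseudoMetricSpace X] {E : Set X} {ε : ℝ}
    (h : ∃ t : Finset X, E ⊆ ⋃ x ∈ t, Metric.ball x ε) :
    ∃ t : Finset X, E ⊆ (⋃ x ∈ t, Metric.ball x ε) ∧ t.card = (covNum E ε).toNat := by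
  classical
  have hP : ∃ n : ℕ, ∃ t : Finset X, E ⊆ (⋃ x ∈ t, Metric.ball x ε) ∧ t.card = n := by
    obtain ⟨t, ht⟩ := h
    exact ⟨_, t, ht, rfl⟩
  obtain ⟨t, ht, hc⟩ := Nat.find_spec hP
  refine ⟨t, ht, ?_⟩
  have : covNum E ε = (t.card : ℕ∞) := by
    apply le_antisymm (iInf₂_le t ht)
    refine le_iInf₂ fun u hu => ?_
    rw [hc]
    exact_mod_cast Nat.find_min' hP ⟨u, hu, rfl⟩
  rw [this]; simp

/-- the polynomial covering bound -/
def CovBound {X : Type*} [PseudoMetricSpace X] (E : Set X) (K d : ℝ) : Prop :=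
  ∀ ε : ℝ, 0 < ε → ε < 1 → ∃ t : Finset X, E ⊆ (⋃ x ∈ t, Metric.ball x ε) ∧
    (t.card : ℝ) ≤ K * ε ^ (-d)

theorem eventually_small {r : ℝ} (hr : 0 < r) :
    ∀ᶠ ε : ℝ in nhdsWithin 0 (Ioi 0), 0 < ε ∧ ε < r :=
  Ioo_mem_nhdsGT hr

theorem fun_nonneg {X : Type*} [PseudoMetricSpace X] (E : Set X) :
    ∀ᶠ ε : ℝ in nhdsWithin 0 (Ioi 0),
      0 ≤ Real.log ((covNum E ε).toNat) / Real.log (1 / ε) := by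
  filter_upwards [eventually_small one_pos] with ε ⟨h0, h1⟩
  apply div_nonneg (Real.log_natCast_nonneg _)
  apply Real.log_nonneg
  rw [le_div_iff₀ h0]; linarith

theorem fun_le {X : Type*} [PseudoMetricSpace X] {E : Set X} {K d : ℝ} (hd : 0 ≤ d)
    (h : CovBound E K d) {η : ℝ} (hη : 0 < η) :
    ∀ᶠ ε : ℝ in nhdsWithin 0 (Ioi 0),
      Real.log ((covNum E ε).toNat) / Real.log (1 / ε) ≤ d + η := by
  set L := max K 1
  have hL : 0 < L := lt_of_lt_of_le one_pos (le_max_right _ _)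
  have h2 : 0 < min 1 (L ^ (-1/η)) := lt_min one_pos (Real.rpow_pos_of_pos hL _)
  filter_upwards [eventually_small h2] with ε ⟨h0, h1⟩
  have h11 : ε < 1 := lt_of_lt_of_le h1 (min_le_left _ _)
  have h12 : ε < L ^ (-1/η) := lt_of_lt_of_le h1 (min_le_right _ _)
  have hlog : 0 < Real.log (1 / ε) := by
    apply Real.log_pos
    rw [lt_div_iff₀ h0]; linarith
  have hlogε : Real.log (1 / ε) = - Real.log ε := by simp
  rw [div_le_iff₀ hlog]
  have hlL : Real.log L ≤ η * Real.log (1/ε) := by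
    have := Real.log_lt_log h0 h12
    rw [Real.log_rpow hL] at this
    rw [hlogε]
    have h3 : η * Real.log ε < η * (-1/η * Real.log L) := by gcongr
    have h4 : η * (-1/η * Real.log L) = - Real.log L := by field_simp
    linarith
  obtain ⟨t, ht, hc⟩ := h ε h0 h11
  have hn : ((covNum E ε).toNat : ℝ) ≤ L * ε ^ (-d) := by
    have : ((covNum E ε).toNat : ℝ) ≤ t.card := by exact_mod_cast covNum_le_card ht
    refine this.trans (hc.trans ?_)
    gcongr
    exact le_max_left _ _
  rcases Nat.eq_zero_or_pos (covNum E ε).toNat with hz | hz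
  · rw [hz]; simp only [Nat.cast_zero, Real.log_zero]; positivity
  have hz' : (0:ℝ) < (covNum E ε).toNat := by exact_mod_cast hz
  have := Real.log_le_log hz' hn
  rw [Real.log_mul hL.ne' (Real.rpow_pos_of_pos h0 _).ne', Real.log_rpow h0] at this
  rw [hlogε] at *
  nlinarith

theorem fun_bdd {X : Type*} [PseudoMetricSpace X] {E : Set X} {K d : ℝ} (hd : 0 ≤ d)
    (h : CovBound E K d) : IsBoundedUnder (· ≤ ·) (nhdsWithin (0:ℝ) (Ioi 0))
      (fun ε : ℝ => Real.log ((covNum E ε).toNat) / Real.log (1 / ε)) :=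
  isBoundedUnder_of_eventually_le (fun_le hd h one_pos)

theorem fun_cobdd {X : Type*} [PseudoMetricSpace X] (E : Set X) :
    IsCoboundedUnder (· ≤ ·) (nhdsWithin (0:ℝ) (Ioi 0))
      (fun ε : ℝ => Real.log ((covNum E ε).toNat) / Real.log (1 / ε)) :=
  (isBoundedUnder_of_eventually_ge (fun_nonneg E)).isCoboundedUnder_le

theorem dimM_le {X : Type*} [PseudoMetricSpace X] {E : Set X} {K d : ℝ} (hd : 0 ≤ d)
    (h : CovBound E K d) : dimM E ≤ d := by
  apply le_of_forall_pos_le_add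
  intro η hη
  exact limsup_le_of_le (fun_cobdd E) (fun_le hd h hη)

theorem dimM_nonneg {X : Type*} [PseudoMetricSpace X] {E : Set X} {K d : ℝ} (hd : 0 ≤ d)
    (h : CovBound E K d) : 0 ≤ dimM E :=
  le_limsup_of_frequently_le (fun_nonneg E).frequently (fun_bdd hd h)

theorem eventually_cover {X : Type*} [PseudoMetricSpace X] {E : Set X} {K d e : ℝ} (hd : 0 ≤ d)
    (h : CovBound E K d) (he : dimM E < e) :
    ∀ᶠ ε : ℝ in nhdsWithin 0 (Ioi 0), ∃ t : Finset X, E ⊆ (⋃ x ∈ t, Metric.ball x ε) ∧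
      (t.card : ℝ) ≤ ε ^ (-e) := by
  filter_upwards [eventually_lt_of_limsup_lt he (fun_bdd hd h), eventually_small one_pos]
    with ε h1 ⟨h0, h01⟩
  obtain ⟨t, ht, -⟩ := h ε h0 h01
  obtain ⟨u, hu, hc⟩ := exists_covNum_cover ⟨t, ht⟩
  refine ⟨u, hu, ?_⟩
  rw [hc]
  have hlog : 0 < Real.log (1 / ε) := by
    apply Real.log_pos
    rw [lt_div_iff₀ h0]; linarith
  rw [div_lt_iff₀ hlog] at h1
  rcases Nat.eq_zero_or_pos (covNum E ε).toNat with hz | hz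
  · rw [hz]; simp only [Nat.cast_zero]; positivity
  have hz' : (0:ℝ) < (covNum E ε).toNat := by exact_mod_cast hz
  rw [← Real.log_le_log_iff hz' (by positivity), Real.log_rpow h0]
  have hlogε : Real.log (1 / ε) = - Real.log ε := by simp
  rw [hlogε] at h1
  linarith

/-- grid in an interval -/
theorem grid_cover (R ε : ℝ) (hR : 1 ≤ R) (h0 : 0 < ε) (h1 : ε < 1) :
    ∃ G : Finset ℝ, (G.card : ℝ) ≤ 6 * R * ε⁻¹ ∧ ∀ x, |x| ≤ R → ∃ g ∈ G, |x - g| < ε := by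
  classical
  refine ⟨(Finset.Icc (-⌈R/ε⌉) ⌈R/ε⌉).image (fun k : ℤ => ε * k), ?_, ?_⟩
  · have h2 : ((Finset.Icc (-⌈R/ε⌉) ⌈R/ε⌉).image (fun k : ℤ => ε * k)).card
        ≤ (⌈R/ε⌉ + 1 - (-⌈R/ε⌉)).toNat := by
      rw [← Int.card_Icc]; exact Finset.card_image_le
    have hp : 0 < R / ε := by positivity
    have hc := Int.ceil_pos.2 hp
    have h3 : (((⌈R/ε⌉ + 1 - (-⌈R/ε⌉)).toNat : ℤ) : ℝ) = 2 * ⌈R/ε⌉ + 1 := by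
      rw [Int.toNat_of_nonneg (by omega)]; push_cast; ring
    have h4 := (Int.ceil_lt_add_one (R/ε)).le
    have h5 : 1 ≤ R / ε := by rw [le_div_iff₀ h0]; linarith
    calc _ ≤ (((⌈R/ε⌉ + 1 - (-⌈R/ε⌉)).toNat : ℕ) : ℝ) := by exact_mod_cast h2
      _ = 2 * ⌈R/ε⌉ + 1 := by exact_mod_cast h3
      _ ≤ 6 * (R / ε) := by linarith
      _ = _ := by ring
  · intro x hx
    refine ⟨ε * ⌊x/ε⌋, Finset.mem_image.2 ⟨⌊x/ε⌋, ?_, rfl⟩, ?_⟩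
    · rw [abs_le] at hx
      rw [Finset.mem_Icc]
      constructor
      · rw [Int.le_floor]; push_cast
        have := Int.le_ceil (R/ε)
        have h6 : -(R/ε) ≤ x / ε := by rw [← neg_div]; gcongr; linarith
        linarith
      · have : x / ε ≤ R / ε := by gcongr; linarith
        exact (Int.floor_mono this).trans (Int.floor_le_ceil _)
    · have h7 := Int.floor_le (x/ε)
      have h8 := Int.lt_floor_add_one (x/ε)
      have h9 : x = ε * (x/ε) := by field_simp
      have h10 : x - ε * ⌊x/ε⌋ = ε * (x/ε - ⌊x/ε⌋) := by
        rw [mul_sub, ← h9]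
      rw [h10, abs_of_nonneg (mul_nonneg h0.le (by linarith))]
      nlinarith

theorem prod_cover (G H : Finset ℝ) (ε : ℝ) : ∃ t : Finset (Fin 2 → ℝ),
    t.card ≤ G.card * H.card ∧ ∀ y : Fin 2 → ℝ, (∃ g ∈ G, |y 0 - g| < ε) →
      (∃ g ∈ H, |y 1 - g| < ε) → y ∈ ⋃ x ∈ t, Metric.ball x ε := by
  classical
  refine ⟨(G ×ˢ H).image (fun p => ![p.1, p.2]), ?_, ?_⟩
  · rw [← Finset.card_product]; exact Finset.card_image_le
  · rintro y ⟨g, hg, h1⟩ ⟨k, hk, h2⟩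
    simp only [mem_iUnion]
    refine ⟨![g, k], Finset.mem_image.2 ⟨(g, k), by simp [hg, hk], rfl⟩, ?_⟩
    have he : 0 < ε := lt_of_le_of_lt (abs_nonneg _) h1
    rw [Metric.mem_ball, dist_pi_lt_iff he]
    intro i
    fin_cases i
    · simpa [Real.dist_eq] using h1
    · simpa [Real.dist_eq] using h2

theorem covBound_of_bounded {E : Set (Fin 2 → ℝ)} (h : IsBounded E) :
    ∃ K, CovBound E K 2 := by
  obtain ⟨R, hR⟩ := h.exists_norm_le
  set R' := max R 1
  refine ⟨(6 * R') * (6 * R'), fun ε h0 h1 => ?_⟩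
  obtain ⟨G, hG, hc⟩ := grid_cover R' ε (le_max_right _ _) h0 h1
  obtain ⟨t, ht, hy⟩ := prod_cover G G ε
  refine ⟨t, fun y hyE => ?_, ?_⟩
  · have hn : ∀ i, |y i| ≤ R' := fun i =>
      ((norm_le_pi_norm y i).trans (hR y hyE)).trans (le_max_left _ _)
    exact hy y (hc _ (hn 0)) (hc _ (hn 1))
  · have : (t.card : ℝ) ≤ G.card * G.card := by exact_mod_cast ht
    have e : ε ^ (-2:ℝ) = ε⁻¹ * ε⁻¹ := by
      rw [Real.rpow_neg h0.le, ← mul_inv]; norm_cast; rw [pow_two]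
    rw [e]
    have hR' : 1 ≤ R' := le_max_right _ _
    calc _ ≤ (G.card : ℝ) * G.card := this
      _ ≤ (6 * R' * ε⁻¹) * (6 * R' * ε⁻¹) := by gcongr
      _ = _ := by ring

theorem dimP_le_dimM {E : Set (Fin 2 → ℝ)} (h : IsBounded E) : dimP E ≤ dimM E := by
  apply csInf_le
  · refine ⟨0, ?_⟩
    rintro a ⟨f, -, hb, rfl⟩
    apply Real.iSup_nonneg
    intro j
    obtain ⟨K, hK⟩ := covBound_of_bounded (hb j)
    exact dimM_nonneg (by norm_num) hK
  · exact ⟨fun _ => E, by simp [iUnion_const], fun _ => h, by simp⟩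

theorem ofDigits_cover (g : Fin 2 → Fin 4) (n : ℕ) : ∃ G : Finset ℝ, G.card ≤ 2 ^ n ∧
    ∀ x : ℕ → Fin 2, ∃ p ∈ G, |Real.ofDigits (fun i => g (x i)) - p| ≤ ((4:ℝ) ^ n)⁻¹ := by
  classical
  refine ⟨Finset.univ.image (fun w : Fin n → Fin 2 =>
    Real.ofDigits (fun i => g (if h : i < n then w ⟨i, h⟩ else 0))), ?_, ?_⟩
  · refine Finset.card_image_le.trans ?_
    simp
  · intro x
    refine ⟨_, Finset.mem_image.2 ⟨fun i => x i, Finset.mem_univ _, rfl⟩, ?_⟩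
    refine Real.abs_ofDigits_sub_ofDigits_le ?_
    intro i hi
    simp [hi]

/-- The set of corner coordinates. -/
def cornerSet : Set ℝ :=
  {c | ∃ x : ℕ → Fin 2, c = 4 * Real.ofDigits (fun i => (![0, 1] : Fin 2 → Fin 4) (x i)) - 5 ∨
    c = 4 * Real.ofDigits (fun i => (![0, 2] : Fin 2 → Fin 4) (x i)) + 5}

theorem cornerSet_cover (ε : ℝ) (h0 : 0 < ε) (h1 : ε < 1) :
    ∃ G : Finset ℝ, (G.card : ℝ) ≤ 8 * ε ^ (-(1/2) : ℝ) ∧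
      ∀ c ∈ cornerSet, ∃ g ∈ G, |c - g| < ε := by
  classical
  have hx : 1 ≤ 4 / ε := by rw [le_div_iff₀ h0]; linarith
  obtain ⟨n, hn1, hn2⟩ := exists_nat_pow_near hx (by norm_num : (1:ℝ) < 4)
  obtain ⟨G1, hc1, hG1⟩ := ofDigits_cover ![0, 1] (n+1)
  obtain ⟨G2, hc2, hG2⟩ := ofDigits_cover ![0, 2] (n+1)
  refine ⟨G1.image (fun p => 4 * p - 5) ∪ G2.image (fun p => 4 * p + 5), ?_, ?_⟩
  · have hcard : (G1.image (fun p => 4 * p - 5) ∪ G2.image (fun p => 4 * p + 5)).card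
        ≤ 2 ^ (n+1) + 2 ^ (n+1) := by
      refine (Finset.card_union_le _ _).trans ?_
      exact add_le_add (Finset.card_image_le.trans hc1) (Finset.card_image_le.trans hc2)
    have h2 : (2:ℝ) ^ (n+1) ≤ 4 * ε ^ (-(1/2) : ℝ) := by
      apply le_of_sq_le_sq _ (by positivity)
      rw [mul_pow, ← Real.rpow_natCast (ε ^ (-(1/2) : ℝ)), ← Real.rpow_mul h0.le]
      norm_num
      rw [Real.rpow_neg_one, ← pow_mul, mul_comm, pow_mul]
      norm_num
      rw [pow_succ]
      calc (4:ℝ)^n * 4 ≤ 4 / ε * 4 := by gcongr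
        _ = _ := by ring
    calc _ ≤ (2:ℝ)^(n+1) + 2^(n+1) := by exact_mod_cast hcard
      _ ≤ _ := by linarith
  · have hsm : 4 * ((4:ℝ)^(n+1))⁻¹ < ε := by
      rw [← div_eq_mul_inv, div_lt_iff₀ (by positivity)]
      rwa [div_lt_iff₀' h0] at hn2
    rintro c ⟨x, rfl | rfl⟩
    · obtain ⟨p, hp, hd⟩ := hG1 x
      refine ⟨4 * p - 5, Finset.mem_union_left _ (Finset.mem_image_of_mem _ hp), ?_⟩
      rw [abs_le] at hd; rw [abs_lt]; constructor <;> linarith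
    · obtain ⟨p, hp, hd⟩ := hG2 x
      refine ⟨4 * p + 5, Finset.mem_union_right _ (Finset.mem_image_of_mem _ hp), ?_⟩
      rw [abs_le] at hd; rw [abs_lt]; constructor <;> linarith

/-- The extremal set. -/
def extSet : Set (Fin 2 → ℝ) :=
  {y | (|y 0| ≤ 9 ∧ |y 1| ≤ 9) ∧ (y 0 ∈ cornerSet ∨ y 1 ∈ cornerSet)}

theorem extSet_bounded : IsBounded extSet := by
  refine isBounded_iff_forall_norm_le.2 ⟨9, fun y hy => ?_⟩
  rw [pi_norm_le_iff_of_nonneg (by norm_num)]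
  intro i
  fin_cases i
  · exact hy.1.1
  · exact hy.1.2

theorem extSet_covBound : CovBound extSet 864 (3/2) := by
  classical
  intro ε h0 h1
  obtain ⟨G, hG, hc⟩ := grid_cover 9 ε (by norm_num) h0 h1
  obtain ⟨H, hH, hcH⟩ := cornerSet_cover ε h0 h1
  obtain ⟨t, ht, hy⟩ := prod_cover G H ε
  obtain ⟨u, hu, hyu⟩ := prod_cover H G ε
  refine ⟨t ∪ u, ?_, ?_⟩
  · rintro y ⟨⟨h9, h9'⟩, hC | hC⟩
    · have := hyu y (hcH _ hC) (hc _ h9')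
      simp only [mem_iUnion] at this ⊢
      obtain ⟨x, hx, hb⟩ := this
      exact ⟨x, Finset.mem_union_right _ hx, hb⟩
    · have := hy y (hc _ h9) (hcH _ hC)
      simp only [mem_iUnion] at this ⊢
      obtain ⟨x, hx, hb⟩ := this
      exact ⟨x, Finset.mem_union_left _ hx, hb⟩
  · have hcard : (t ∪ u).card ≤ G.card * H.card + H.card * G.card :=
      (Finset.card_union_le _ _).trans (add_le_add ht hu)
    have e : ε ^ (-(3/2) : ℝ) = ε⁻¹ * ε ^ (-(1/2) : ℝ) := by
      rw [← Real.rpow_neg_one, ← Real.rpow_add h0]; norm_num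
    have hmul : (G.card : ℝ) * H.card ≤ (6 * 9 * ε⁻¹) * (8 * ε ^ (-(1/2) : ℝ)) := by gcongr
    calc _ ≤ (G.card : ℝ) * H.card + H.card * G.card := by exact_mod_cast hcard
      _ = 2 * ((G.card : ℝ) * H.card) := by ring
      _ ≤ 2 * ((6 * 9 * ε⁻¹) * (8 * ε ^ (-(1/2) : ℝ))) := by linarith
      _ = _ := by rw [e]; ring

theorem digit_split (d : ℕ → Fin 4) :
    Real.ofDigits (fun i => (![0, 1] : Fin 2 → Fin 4) ((![0, 1, 0, 1] : Fin 4 → Fin 2) (d i))) +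
    Real.ofDigits (fun i => (![0, 2] : Fin 2 → Fin 4) ((![0, 0, 1, 1] : Fin 4 → Fin 2) (d i))) =
    Real.ofDigits d := by
  unfold Real.ofDigits
  rw [← Summable.tsum_add Real.summable_ofDigitsTerm Real.summable_ofDigitsTerm]
  congr 1
  funext i
  unfold Real.ofDigitsTerm
  rw [← add_mul]
  congr 1
  have : ∀ k : Fin 4, ((![0, 1] : Fin 2 → Fin 4) ((![0, 1, 0, 1] : Fin 4 → Fin 2) k)).val +
    ((![0, 2] : Fin 2 → Fin 4) ((![0, 0, 1, 1] : Fin 4 → Fin 2) k)).val = k.val := by decide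
  exact_mod_cast this (d i)

theorem extSet_diag : DiagProp extSet := by
  intro t ht
  set d := Real.digits (t/2) 4
  have hd : Real.ofDigits d = t / 2 :=
    Real.ofDigits_digits (by norm_num) ⟨by linarith [ht.1], by linarith [ht.2]⟩
  have hs := digit_split d
  set x1 : ℕ → Fin 2 := fun i => (![0, 1, 0, 1] : Fin 4 → Fin 2) (d i)
  set x2 : ℕ → Fin 2 := fun i => (![0, 0, 1, 1] : Fin 4 → Fin 2) (d i)
  have ha : 4 * Real.ofDigits (fun i => (![0, 1] : Fin 2 → Fin 4) (x1 i)) - 5 ∈ cornerSet :=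
    ⟨x1, Or.inl rfl⟩
  have hb : 4 * Real.ofDigits (fun i => (![0, 2] : Fin 2 → Fin 4) (x2 i)) + 5 ∈ cornerSet :=
    ⟨x2, Or.inr rfl⟩
  have hu0 := Real.ofDigits_nonneg (fun i => (![0, 1] : Fin 2 → Fin 4) (x1 i))
  have hu1 := Real.ofDigits_le_one (fun i => (![0, 1] : Fin 2 → Fin 4) (x1 i))
  have hv0 := Real.ofDigits_nonneg (fun i => (![0, 2] : Fin 2 → Fin 4) (x2 i))
  have hv1 := Real.ofDigits_le_one (fun i => (![0, 2] : Fin 2 → Fin 4) (x2 i))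
  rw [hd] at hs
  generalize Real.ofDigits (fun i => (![0, 1] : Fin 2 → Fin 4) (x1 i)) = u at *
  generalize Real.ofDigits (fun i => (![0, 2] : Fin 2 → Fin 4) (x2 i)) = v at *
  refine ⟨2 * v - 2 * u + 5, by linarith, ?_⟩
  have key : ∀ z : ℝ, |z - t| = 2 * v - 2 * u + 5 → z ∈ cornerSet := by
    intro z hz
    rcases eq_or_eq_neg_of_abs_eq hz with h | h
    · have : z = 4 * v + 5 := by linarith
      rwa [this]
    · have : z = 4 * u - 5 := by linarith
      rwa [this]
  have key2 : ∀ z : ℝ, |z - t| ≤ 2 * v - 2 * u + 5 → |z| ≤ 9 := by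
    intro z hz
    rw [abs_le] at hz ⊢
    constructor <;> linarith
  intro y hy
  simp only [squareBdry, mem_setOf_eq, Matrix.cons_val_zero, Matrix.cons_val_one] at hy
  refine ⟨⟨key2 _ (hy ▸ le_max_left _ _), key2 _ (hy ▸ le_max_right _ _)⟩, ?_⟩
  rcases max_choice |y 0 - t| |y 1 - t| with h | h
  · exact Or.inl (key _ (h ▸ hy))
  · exact Or.inr (key _ (h ▸ hy))

theorem slice_cover (t : Finset (Fin 2 → ℝ)) (C : Set ℝ) (p q ε : ℝ) (hpq : p < q) (h0 : 0 < ε)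
    (h : ∀ c ∈ C, ∀ y ∈ Icc p q, ∃ x ∈ t, dist ![c, y] x ≤ ε) :
    ∃ S : Finset ℝ, (S.card : ℝ) * ((q - p) / (3 * ε)) ≤ t.card ∧
      ∀ c ∈ C, ∃ x ∈ S, |c - x| ≤ ε := by
  classical
  have hr : 0 < (q - p) / (3 * ε) := div_pos (by linarith) (by positivity)
  set M := ⌊(q - p) / (3 * ε)⌋₊ + 1 with hM
  have hMr : (q - p) / (3 * ε) < M := by
    rw [hM]; push_cast; exact Nat.lt_floor_add_one _
  set S : ℕ → Finset (Fin 2 → ℝ) := fun k => t.filter (fun x => |x 1 - (p + 3 * ε * k)| ≤ ε)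
    with hS
  have hdisj : ∀ k ∈ Finset.range M, ∀ l ∈ Finset.range M, k ≠ l → Disjoint (S k) (S l) := by
    intro k _ l _ hkl
    rw [Finset.disjoint_left]
    intro x hxk hxl
    have h1 := (Finset.mem_filter.1 hxk).2
    have h2 := (Finset.mem_filter.1 hxl).2
    rw [abs_le] at h1 h2
    rcases lt_or_gt_of_ne hkl with hlt | hlt
    · have : (k : ℝ) + 1 ≤ l := by exact_mod_cast hlt
      nlinarith
    · have : (l : ℝ) + 1 ≤ k := by exact_mod_cast hlt
      nlinarith
  have hsum : ∑ k ∈ Finset.range M, (S k).card ≤ t.card := by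
    rw [← Finset.card_biUnion hdisj]
    apply Finset.card_le_card
    intro x hx
    obtain ⟨k, -, hk⟩ := Finset.mem_biUnion.1 hx
    exact (Finset.mem_filter.1 hk).1
  obtain ⟨k, hk, hkc⟩ : ∃ k ∈ Finset.range M, (S k).card * M ≤ t.card := by
    by_contra! hcon
    have h1 : ∑ k ∈ Finset.range M, t.card < ∑ k ∈ Finset.range M, (S k).card * M :=
      Finset.sum_lt_sum_of_nonempty ⟨0, by simp [hM]⟩ hcon
    rw [← Finset.sum_mul] at h1
    simp only [Finset.sum_const, Finset.card_range, smul_eq_mul] at h1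
    nlinarith
  refine ⟨(S k).image (fun x => x 0), ?_, ?_⟩
  · calc _ ≤ ((S k).card : ℝ) * M := by
          gcongr
          exact Finset.card_image_le
      _ ≤ _ := by exact_mod_cast hkc
  · intro c hc
    have hkM : (k : ℝ) ≤ (q - p) / (3 * ε) := by
      have : k ≤ ⌊(q - p) / (3 * ε)⌋₊ := by
        have := Finset.mem_range.1 hk; omega
      exact (Nat.le_floor_iff hr.le).1 this
    rw [le_div_iff₀ (by positivity)] at hkM
    obtain ⟨x, hx, hd⟩ := h c hc (p + 3 * ε * k) ⟨by
      have : 0 ≤ 3 * ε * (k:ℝ) := by positivity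
      linarith, by linarith⟩
    rw [dist_pi_le_iff h0.le] at hd
    have hd0 := hd 0
    have hd1 := hd 1
    simp only [Real.dist_eq, Matrix.cons_val_zero, Matrix.cons_val_one] at hd0 hd1
    refine ⟨x 0, Finset.mem_image.2 ⟨x, Finset.mem_filter.2 ⟨hx, ?_⟩, rfl⟩, hd0⟩
    rwa [abs_sub_comm]

theorem cover_closure {E : Set (Fin 2 → ℝ)} {t : Finset (Fin 2 → ℝ)} {ε : ℝ}
    (h : E ⊆ ⋃ x ∈ t, Metric.ball x ε) {z : Fin 2 → ℝ} (hz : z ∈ closure E) :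
    ∃ x ∈ t, dist z x ≤ ε := by
  have hcl : IsClosed (⋃ x ∈ t, Metric.closedBall x ε) :=
    t.finite_toSet.isClosed_biUnion fun x _ => Metric.isClosed_closedBall
  have : closure E ⊆ ⋃ x ∈ t, Metric.closedBall x ε := by
    apply closure_minimal _ hcl
    exact h.trans (iUnion₂_mono fun x _ => Metric.ball_subset_closedBall)
  simpa using this hz

theorem baire_side {f : ℕ → Set (Fin 2 → ℝ)} {a b c : ℝ} (hab : a < b)
    (h : ∀ y ∈ Icc a b, ![c, y] ∈ ⋃ j, f j) :
    ∃ (j : ℕ) (p q : ℚ), (p : ℝ) < q ∧ ∀ y ∈ Icc (p : ℝ) q, ![c, y] ∈ closure (f j) := by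
  set F : Option ℕ → Set ℝ := fun o => o.elim (Ioo a b)ᶜ (fun j => {y | ![c, y] ∈ closure (f j)})
    with hF
  have hc : ∀ o, IsClosed (F o) := by
    rintro (_ | j)
    · exact isOpen_Ioo.isClosed_compl
    · have hcont : Continuous (fun y : ℝ => (![c, y] : Fin 2 → ℝ)) := by fun_prop
      exact isClosed_closure.preimage hcont
  have hU : ⋃ o, F o = univ := by
    rw [eq_univ_iff_forall]
    intro y
    rw [mem_iUnion]
    by_cases hy : y ∈ Ioo a b
    · obtain ⟨j, hj⟩ := mem_iUnion.1 (h y (Ioo_subset_Icc_self hy))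
      exact ⟨some j, subset_closure hj⟩
    · exact ⟨none, hy⟩
  have hD := dense_iUnion_interior_of_closed hc hU
  obtain ⟨z, hz, hzU⟩ := hD.exists_mem_open isOpen_Ioo (nonempty_Ioo.2 hab)
  obtain ⟨o, ho⟩ := mem_iUnion.1 hz
  rcases o with _ | j
  · exact absurd hzU (interior_subset ho)
  · obtain ⟨l, u, ⟨hl, hu⟩, hlu⟩ := mem_nhds_iff_exists_Ioo_subset.1 (mem_interior_iff_mem_nhds.1 ho)
    obtain ⟨p, hp1, hp2⟩ := exists_rat_btwn hl
    obtain ⟨q, hq1, hq2⟩ := exists_rat_btwn hu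
    refine ⟨j, p, q, by linarith, fun y hy => ?_⟩
    exact hlu ⟨by linarith [hy.1], by linarith [hy.2]⟩

open MeasureTheory in
theorem null_of_cover {E1 E2 : Set (Fin 2 → ℝ)} {d p1 q1 p2 q2 : ℝ} (hd : d < 3 / 2)
    (h1 : p1 < q1) (h2 : p2 < q2)
    (hE1 : ∀ᶠ ε : ℝ in nhdsWithin 0 (Ioi 0), ∃ t : Finset (Fin 2 → ℝ),
      E1 ⊆ (⋃ x ∈ t, Metric.ball x ε) ∧ (t.card : ℝ) ≤ ε ^ (-d))
    (hE2 : ∀ᶠ ε : ℝ in nhdsWithin 0 (Ioi 0), ∃ t : Finset (Fin 2 → ℝ),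
      E2 ⊆ (⋃ x ∈ t, Metric.ball x ε) ∧ (t.card : ℝ) ≤ ε ^ (-d)) (T : Set ℝ)
    (hT : ∀ t ∈ T, ∃ a b : ℝ, a + b = 2 * t ∧ (∀ y ∈ Icc p1 q1, ![a, y] ∈ closure E1) ∧
      (∀ y ∈ Icc p2 q2, ![b, y] ∈ closure E2)) : volume T = 0 := by
  classical
  set K := 18 / ((q1 - p1) * (q2 - p2)) with hK
  have hq1 : 0 < q1 - p1 := by linarith
  have hq2 : 0 < q2 - p2 := by linarith
  have hKey : ∀ᶠ ε : ℝ in nhdsWithin 0 (Ioi 0),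
      volume T ≤ ENNReal.ofReal (K * ε ^ (3 - 2 * d)) := by
    filter_upwards [hE1, hE2, eventually_small one_pos] with ε ⟨t1, ht1, hc1⟩ ⟨t2, ht2, hc2⟩ ⟨h0, _⟩
    obtain ⟨S1, hS1, hS1'⟩ := slice_cover t1 {a | ∀ y ∈ Icc p1 q1, ![a, y] ∈ closure E1}
      p1 q1 ε h1 h0 (fun c hc y hy => cover_closure ht1 (hc y hy))
    obtain ⟨S2, hS2, hS2'⟩ := slice_cover t2 {a | ∀ y ∈ Icc p2 q2, ![a, y] ∈ closure E2}
      p2 q2 ε h2 h0 (fun c hc y hy => cover_closure ht2 (hc y hy))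
    have hsub : T ⊆ ⋃ w ∈ S1 ×ˢ S2, Metric.closedBall ((w.1 + w.2) / 2) ε := by
      intro t ht
      obtain ⟨a, b, hab, ha, hb⟩ := hT t ht
      obtain ⟨x1, hx1, hax⟩ := hS1' a ha
      obtain ⟨x2, hx2, hbx⟩ := hS2' b hb
      simp only [mem_iUnion]
      refine ⟨(x1, x2), Finset.mem_product.2 ⟨hx1, hx2⟩, ?_⟩
      rw [Metric.mem_closedBall, Real.dist_eq]
      rw [abs_le] at *
      constructor <;> simp only <;> linarith
    have hvol : volume T ≤ ENNReal.ofReal ((S1.card : ℝ) * S2.card * (2 * ε)) := by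
      calc volume T ≤ volume (⋃ w ∈ S1 ×ˢ S2, Metric.closedBall ((w.1 + w.2) / 2) ε) :=
            measure_mono hsub
        _ ≤ ∑ w ∈ S1 ×ˢ S2, volume (Metric.closedBall ((w.1 + w.2) / 2) ε) :=
            measure_biUnion_finset_le _ _
        _ = (S1 ×ˢ S2).card * ENNReal.ofReal (2 * ε) := by
            simp [Real.volume_closedBall]
        _ = _ := by
            rw [Finset.card_product, ← Nat.cast_mul,
              ENNReal.ofReal_mul (p := ((S1.card * S2.card : ℕ) : ℝ)) (Nat.cast_nonneg _),
              ENNReal.ofReal_natCast]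
    refine hvol.trans (ENNReal.ofReal_le_ofReal ?_)
    have hb1 : (S1.card : ℝ) ≤ ε ^ (-d) * (3 * ε / (q1 - p1)) := by
      have := hS1.trans hc1
      rw [← le_div_iff₀ (by positivity)] at this
      refine this.trans (le_of_eq ?_)
      field_simp
    have hb2 : (S2.card : ℝ) ≤ ε ^ (-d) * (3 * ε / (q2 - p2)) := by
      have := hS2.trans hc2
      rw [← le_div_iff₀ (by positivity)] at this
      refine this.trans (le_of_eq ?_)
      field_simp
    have e : ε ^ (3 - 2 * d) = ε ^ (-d) * ε ^ (-d) * (ε * ε * ε) := by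
      have h3 : ε * ε * ε = ε ^ (3:ℝ) := by norm_cast; ring
      rw [h3, ← Real.rpow_add h0, ← Real.rpow_add h0]; congr 1; ring
    calc (S1.card : ℝ) * S2.card * (2 * ε) ≤
        (ε ^ (-d) * (3 * ε / (q1 - p1))) * (ε ^ (-d) * (3 * ε / (q2 - p2))) * (2 * ε) := by
          gcongr
      _ = _ := by rw [e, hK]; field_simp; ring
  have hlim : Tendsto (fun ε : ℝ => ENNReal.ofReal (K * ε ^ (3 - 2 * d)))
      (nhdsWithin 0 (Ioi 0)) (nhds 0) := by
    have : Tendsto (fun ε : ℝ => K * ε ^ (3 - 2 * d)) (nhds 0) (nhds 0) := by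
      have h := (Real.continuousAt_rpow_const (0:ℝ) (3 - 2 * d)
        (Or.inr (by linarith))).tendsto.const_mul K
      rw [Real.zero_rpow (by linarith : 3 - 2 * d ≠ 0), mul_zero] at h
      exact h
    have h := ENNReal.tendsto_ofReal (this.mono_left (nhdsWithin_le_nhds (s := Ioi 0)))
    simpa using h
  exact le_antisymm (ge_of_tendsto hlim hKey) zero_le

open MeasureTheory in
theorem lower_bound (B : Set (Fin 2 → ℝ)) (hB : DiagProp B) : (3 : ℝ) / 2 ≤ dimP B := by
  apply le_csInf
  · refine ⟨_, fun j => Metric.closedBall 0 j, ?_, fun j => Metric.isBounded_closedBall, rfl⟩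
    rw [Metric.iUnion_closedBall_nat]
    exact subset_univ _
  rintro _ ⟨f, hf, hb, rfl⟩
  by_contra! hlt
  have hbd : BddAbove (range fun j => dimM (f j)) := by
    refine ⟨2, ?_⟩
    rintro _ ⟨j, rfl⟩
    obtain ⟨K, hK⟩ := covBound_of_bounded (hb j)
    exact dimM_le (by norm_num) hK
  obtain ⟨d, hd1, hd2⟩ := exists_between hlt
  have hcov : ∀ j, ∀ᶠ ε : ℝ in nhdsWithin 0 (Ioi 0), ∃ t : Finset (Fin 2 → ℝ),
      f j ⊆ (⋃ x ∈ t, Metric.ball x ε) ∧ (t.card : ℝ) ≤ ε ^ (-d) := by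
    intro j
    obtain ⟨K, hK⟩ := covBound_of_bounded (hb j)
    exact eventually_cover (by norm_num) hK (lt_of_le_of_lt (le_ciSup hbd j) hd1)
  set T : (ℕ × ℚ × ℚ) × (ℕ × ℚ × ℚ) → Set ℝ := fun w =>
    {t | (w.1.2.1 : ℝ) < w.1.2.2 ∧ (w.2.2.1 : ℝ) < w.2.2.2 ∧ ∃ a b : ℝ, a + b = 2 * t ∧
      (∀ y ∈ Icc (w.1.2.1 : ℝ) w.1.2.2, ![a, y] ∈ closure (f w.1.1)) ∧
      (∀ y ∈ Icc (w.2.2.1 : ℝ) w.2.2.2, ![b, y] ∈ closure (f w.2.1))} with hT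
  have hnull : ∀ w, volume (T w) = 0 := by
    intro w
    by_cases h1 : (w.1.2.1 : ℝ) < w.1.2.2
    · by_cases h2 : (w.2.2.1 : ℝ) < w.2.2.2
      · exact null_of_cover hd2 h1 h2 (hcov w.1.1) (hcov w.2.1) _ (fun t ht => ht.2.2)
      · have : T w = ∅ := eq_empty_of_forall_notMem fun t ht => h2 ht.2.1
        rw [this]; simp
    · have : T w = ∅ := eq_empty_of_forall_notMem fun t ht => h1 ht.1
      rw [this]; simp
  have hsub : Icc (0:ℝ) 1 ⊆ ⋃ w, T w := by
    intro t ht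
    obtain ⟨s, hs, hsq⟩ := hB t ht
    obtain ⟨j, p, q, hpq, h1⟩ := baire_side (f := f) (a := t - s) (b := t + s) (c := t - s)
      (by linarith) (fun y hy => hf (hsq (by
        have hy' : |y - t| ≤ s := abs_le.2 ⟨by linarith [hy.1], by linarith [hy.2]⟩
        simp [squareBdry, abs_of_pos hs, hy'])))
    obtain ⟨j', p', q', hpq', h1'⟩ := baire_side (f := f) (a := t - s) (b := t + s) (c := t + s)
      (by linarith) (fun y hy => hf (hsq (by
        have hy' : |y - t| ≤ s := abs_le.2 ⟨by linarith [hy.1], by linarith [hy.2]⟩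
        simp [squareBdry, abs_of_pos hs, hy'])))
    exact mem_iUnion.2 ⟨((j, p, q), (j', p', q')), hpq, hpq', t - s, t + s, by ring, h1, h1'⟩
  have h0 : volume (Icc (0:ℝ) 1) = 0 := measure_mono_null hsub (measure_iUnion_null hnull)
  simp at h0

/-- Every set containing an axis-parallel square boundary centered at each point of the diagonal
segment `{(t,t) : t ∈ [0,1]}` has packing dimension at least `3/2`; for every `ε > 0` there is
a bounded such set of Minkowski dimension at most `3/2 + ε`; and hence the corresponding
infima of packing (resp. Minkowski, over bounded sets) dimension both equal `3/2`. -/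
theorem stmt13 :
    (∀ B : Set (Fin 2 → ℝ), DiagProp B → (3 : ℝ) / 2 ≤ dimP B) ∧
    (∀ ε > (0 : ℝ), ∃ B : Set (Fin 2 → ℝ), IsBounded B ∧ DiagProp B ∧
      dimM B ≤ 3 / 2 + ε) ∧
    sInf { a : ℝ | ∃ B : Set (Fin 2 → ℝ), DiagProp B ∧ a = dimP B } = 3 / 2 ∧
    sInf { a : ℝ | ∃ B : Set (Fin 2 → ℝ), IsBounded B ∧ DiagProp B ∧ a = dimM B } = 3 / 2 := by
  have hle : dimM extSet ≤ 3 / 2 := dimM_le (by norm_num) extSet_covBound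
  have hPM := dimP_le_dimM extSet_bounded
  have hP := lower_bound extSet extSet_diag
  refine ⟨lower_bound, fun ε hε => ⟨extSet, extSet_bounded, extSet_diag, by linarith⟩, ?_, ?_⟩
  · apply IsLeast.csInf_eq
    refine ⟨⟨extSet, extSet_diag, by linarith⟩, ?_⟩
    rintro _ ⟨B, hB, rfl⟩
    exact lower_bound B hB
  · apply IsLeast.csInf_eq
    refine ⟨⟨extSet, extSet_bounded, extSet_diag, by linarith⟩, ?_⟩
    rintro _ ⟨B, hb, hB, rfl⟩
    exact (lower_bound B hB).trans (dimP_le_dimM hb)
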